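/- Let K be a number field whose ring of integers R is a principal ideal domain, and let [F,G] be an R-minimal model of a rational map φ of degree d ≥ 2 over K. Then the set {A ∈ GL₂(K) : there exists λ ∈ K^× such that [λF_A, λG_A] has coefficients in R and is an R-minimal model of [φ]} has image in PGL₂(K) equal to a finite union of left cosets of the image of GL₂(R) in PGL₂(K). -/

import Mathlib

noncomputable section

/-- Determinant of the Sylvester matrix of two polynomials, given by coefficient
sequences `p` (regarded as having degree `m`) and `q` (regarded as having degree `n`). -/
def sylRes {K : Type*} [CommRing K] (m n : ℕ) (p q : ℕ → K) : K :=
  Matrix.det (Matrix.of fun i j : Fin (n + m) =>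
    if (i : ℕ) < n then
      (if (i : ℕ) ≤ (j : ℕ) ∧ (j : ℕ) ≤ (i : ℕ) + m then p (m - ((j : ℕ) - (i : ℕ))) else 0)
    else
      (if (i : ℕ) - n ≤ (j : ℕ) ∧ (j : ℕ) ≤ ((i : ℕ) - n) + n then
        q (n - ((j : ℕ) - ((i : ℕ) - n))) else 0))

/-- The binary form of degree `d` with coefficient sequence `f`
(`f i` is the coefficient of `X^i Y^(d-i)`). -/
def toForm {K : Type*} [CommRing K] (d : ℕ) (f : ℕ → K) : MvPolynomial (Fin 2) K :=
  ∑ i ∈ Finset.range (d + 1),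
    MvPolynomial.C (f i) * MvPolynomial.X 0 ^ i * MvPolynomial.X 1 ^ (d - i)

/-- Substitution `X ↦ A₀₀ X + A₀₁ Y`, `Y ↦ A₁₀ X + A₁₁ Y`. -/
def substMat {K : Type*} [CommRing K] (A : Matrix (Fin 2) (Fin 2) K)
    (P : MvPolynomial (Fin 2) K) : MvPolynomial (Fin 2) K :=
  MvPolynomial.eval₂ MvPolynomial.C
    (fun k => MvPolynomial.C (A k 0) * MvPolynomial.X 0 + MvPolynomial.C (A k 1) * MvPolynomial.X 1) P

/-- Coefficient sequence of a binary form of degree `d`. -/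
def coeffVec {K : Type*} [CommRing K] (d : ℕ) (P : MvPolynomial (Fin 2) K) : ℕ → K :=
  fun i => MvPolynomial.coeff (Finsupp.single (0 : Fin 2) i + Finsupp.single (1 : Fin 2) (d - i)) P

/-- Coefficients of `F_A = δ·(F∘A) − β·(G∘A)` for `A = [[α,β],[γ,δ]]`. -/
def FA {K : Type*} [CommRing K] (d : ℕ) (f g : ℕ → K) (A : Matrix (Fin 2) (Fin 2) K) : ℕ → K :=
  coeffVec d (MvPolynomial.C (A 1 1) * substMat A (toForm d f) -
    MvPolynomial.C (A 0 1) * substMat A (toForm d g))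

/-- Coefficients of `G_A = −γ·(F∘A) + α·(G∘A)` for `A = [[α,β],[γ,δ]]`. -/
def GA {K : Type*} [CommRing K] (d : ℕ) (f g : ℕ → K) (A : Matrix (Fin 2) (Fin 2) K) : ℕ → K :=
  coeffVec d (-(MvPolynomial.C (A 1 0)) * substMat A (toForm d f) +
    MvPolynomial.C (A 0 0) * substMat A (toForm d g))

/-- The ideal `Res_R([φ])`: generated by the resultants of all models over `R`
of the form `[F,G]^{(λ,A)}` with `(λ,A) ∈ K^× × GL₂(K)`. -/
def ResIdeal (R : Type*) {K : Type*} [CommRing R] [Field K] [Algebra R K]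
    (d : ℕ) (f g : ℕ → K) : Ideal R :=
  Ideal.span { r : R | ∃ (l : K) (A : Matrix (Fin 2) (Fin 2) K), l ≠ 0 ∧ A.det ≠ 0 ∧
    (∀ i, ∃ a : R, algebraMap R K a = l * FA d f g A i) ∧
    (∀ i, ∃ b : R, algebraMap R K b = l * GA d f g A i) ∧
    algebraMap R K r = sylRes d d (fun i => l * FA d f g A i) (fun i => l * GA d f g A i) }

/-- The ideal `Res_R([φ]₁)`: as `ResIdeal` but with `A` restricted to affine
(upper-triangular) transformations. -/
def AffResIdeal (R : Type*) {K : Type*} [CommRing R] [Field K] [Algebra R K]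
    (d : ℕ) (f g : ℕ → K) : Ideal R :=
  Ideal.span { r : R | ∃ (l : K) (A : Matrix (Fin 2) (Fin 2) K), l ≠ 0 ∧ A.det ≠ 0 ∧ A 1 0 = 0 ∧
    (∀ i, ∃ a : R, algebraMap R K a = l * FA d f g A i) ∧
    (∀ i, ∃ b : R, algebraMap R K b = l * GA d f g A i) ∧
    algebraMap R K r = sylRes d d (fun i => l * FA d f g A i) (fun i => l * GA d f g A i) }

/-!
Let `ψ` be one minimal model. If `A` carries `ψ` to another minimal model, the Smith normal form
`A = P D Q` over the principal ideal domain `R` reduces matters to a diagonal matrix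
`D = diag(a, b)`, because `GL₂(R)` preserves minimality. Comparing resultants shows that
`λ² (a b)^(d+1)` is a unit, so the extreme coefficients of the two models bound `(b/a)^(d+1)` and
`(b/a)^(d-1)` by `f₀²` and `g₀²`, and likewise for `a/b` with `f_d` and `g_d`. The resultant `r` of
`ψ` lies in the ideals `(f₀, g₀)` and `(f_d, g_d)`, so `r² b/a` and `r² a/b` are integral: `R` is
integrally closed. Hence up to a scalar `A` is an integral matrix dividing `r⁴`. Two matrices
dividing `N` which are congruent modulo `N` differ by a right factor in `GL₂(R)`, and `R / r⁴` is
finite.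
-/

open Finset Polynomial
open MvPolynomial (isHomogeneous_X)

section Forms

variable {K : Type*} [CommRing K]

/-- The polynomial `F(X, 1)` of the form `F` of degree `d` with coefficient sequence `f`. -/
def dehomogenization (d : ℕ) (f : ℕ → K) : K[X] :=
  ∑ i ∈ range (d + 1), C (f i) * X ^ i

theorem coeff_dehomogenization (d : ℕ) (f : ℕ → K) (i : ℕ) :
    (dehomogenization d f).coeff i = if i ≤ d then f i else 0 := by
  simp [dehomogenization, coeff_C_mul, coeff_X_pow, Order.lt_add_one_iff]

theorem natDegree_dehomogenization_le (d : ℕ) (f : ℕ → K) :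
    (dehomogenization d f).natDegree ≤ d :=
  natDegree_le_iff_coeff_eq_zero.2 fun i hi => by
    rw [coeff_dehomogenization, if_neg (by lia)]

theorem dehomogenization_congr {d : ℕ} {f g : ℕ → K} (h : ∀ i ≤ d, f i = g i) :
    dehomogenization d f = dehomogenization d g :=
  sum_congr rfl fun i hi => by rw [h i (by simpa [Order.lt_add_one_iff] using hi)]

theorem homogenize_dehomogenization (d : ℕ) (f : ℕ → K) :
    (dehomogenization d f).homogenize d = toForm d f := by
  rw [dehomogenization, homogenize_finsetSum, toForm]
  refine sum_congr rfl fun i hi => ?_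
  rw [homogenize_C_mul, homogenize_X_pow (by simpa [Order.lt_add_one_iff] using hi), mul_assoc]

theorem isHomogeneous_toForm (d : ℕ) (f : ℕ → K) : (toForm d f).IsHomogeneous d :=
  homogenize_dehomogenization d f ▸ isHomogeneous_homogenize _

theorem toForm_coeffVec {d : ℕ} {P : MvPolynomial (Fin 2) K} (hP : P.IsHomogeneous d) :
    toForm d (coeffVec d P) = P := by
  rw [← homogenize_dehomogenization, ← homogenize_eq_of_isHomogeneous hP rfl]
  ext m
  simp only [coeff_homogenize, coeff_dehomogenization]
  split_ifs with hm hle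
  · simp [coeffVec, coeff_homogenize, hle]
  · lia
  · rfl

theorem dehomogenization_coeffVec {d : ℕ} {P : MvPolynomial (Fin 2) K} (hP : P.IsHomogeneous d) :
    dehomogenization d (coeffVec d P) = MvPolynomial.aeval ![X, 1] P := by
  rw [← aeval_homogenize_X_one _ (natDegree_dehomogenization_le d _), homogenize_dehomogenization,
    toForm_coeffVec hP]

/-- `substMat A` as an algebra homomorphism: the linear change of variables given by `A`. -/
def substHom (A : Matrix (Fin 2) (Fin 2) K) :
    MvPolynomial (Fin 2) K →ₐ[K] MvPolynomial (Fin 2) K :=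
  MvPolynomial.aeval fun k => .C (A k 0) * .X 0 + .C (A k 1) * .X 1

theorem substHom_X (A : Matrix (Fin 2) (Fin 2) K) (k : Fin 2) :
    substHom A (.X k) = .C (A k 0) * .X 0 + .C (A k 1) * .X 1 :=
  MvPolynomial.aeval_X _ _

theorem substHom_C (A : Matrix (Fin 2) (Fin 2) K) (a : K) : substHom A (.C a) = .C a :=
  MvPolynomial.algHom_C _ _

theorem substHom_substHom (A B : Matrix (Fin 2) (Fin 2) K) (P : MvPolynomial (Fin 2) K) :
    substHom B (substHom A P) = substHom (A * B) P := by
  rw [← AlgHom.comp_apply]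
  refine DFunLike.congr_fun (MvPolynomial.algHom_ext fun k => ?_) P
  simp only [AlgHom.comp_apply, substHom_X, map_add, map_mul, substHom_C, Matrix.mul_apply,
    Fin.sum_univ_two]
  ring

theorem isHomogeneous_substHom (A : Matrix (Fin 2) (Fin 2) K) {n : ℕ}
    {P : MvPolynomial (Fin 2) K} (hP : P.IsHomogeneous n) : (substHom A P).IsHomogeneous n := by
  have hlin (k : Fin 2) :
      (.C (A k 0) * .X 0 + .C (A k 1) * .X 1 : MvPolynomial (Fin 2) K).IsHomogeneous 1 :=
    ((isHomogeneous_X K 0).C_mul _).add ((isHomogeneous_X K 1).C_mul _)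
  rw [← one_mul n]
  exact hP.aeval _ hlin

theorem dehomogenization_substHom (A : Matrix (Fin 2) (Fin 2) K) (d : ℕ) (f : ℕ → K) :
    MvPolynomial.aeval ![X, 1] (substHom A (toForm d f)) = ∑ i ∈ range (d + 1),
      C (f i) * (C (A 0 0) * X + C (A 0 1)) ^ i * (C (A 1 0) * X + C (A 1 1)) ^ (d - i) := by
  simp [toForm, substHom_X]

theorem substHom_map {R : Type*} [CommRing R] (σ : R →+* K) (A : Matrix (Fin 2) (Fin 2) R)
    (P : MvPolynomial (Fin 2) R) :
    substHom (A.map σ) (P.map σ) = (substHom A P).map σ := by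
  induction P using MvPolynomial.induction_on with
  | C a => simp only [MvPolynomial.map_C, substHom_C]
  | add P Q hP hQ => simp only [map_add, hP, hQ]
  | mul_X P k hP => simp [hP, substHom_X]

end Forms

section Transform

variable {K : Type*} [CommRing K]

/-- The pair `[F_A, G_A]`, both pairs of forms being given by their coefficient sequences;
the components of `φ` are `F` and `G`. -/
def transform (d : ℕ) (φ : Fin 2 → ℕ → K) (A : Matrix (Fin 2) (Fin 2) K) : Fin 2 → ℕ → K :=
  ![FA d (φ 0) (φ 1) A, GA d (φ 0) (φ 1) A]

theorem transform_eq_coeffVec (d : ℕ) (φ : Fin 2 → ℕ → K) (A : Matrix (Fin 2) (Fin 2) K)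
    (k : Fin 2) :
    transform d φ A k =
      coeffVec d (∑ j, MvPolynomial.C (A.adjugate k j) * substHom A (toForm d (φ j))) := by
  have hsub (P : MvPolynomial (Fin 2) K) : substMat A P = substHom A P := rfl
  fin_cases k <;> simp [transform, FA, GA, hsub, Matrix.adjugate_fin_two, sub_eq_add_neg]

theorem isHomogeneous_transform_form (d : ℕ) (φ : Fin 2 → ℕ → K) (A : Matrix (Fin 2) (Fin 2) K)
    (k : Fin 2) :
    (∑ j, MvPolynomial.C (A.adjugate k j) * substHom A (toForm d (φ j))).IsHomogeneous d :=
  .sum _ _ _ fun j _ => (isHomogeneous_substHom A (isHomogeneous_toForm d (φ j))).C_mul _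

theorem toForm_transform (d : ℕ) (φ : Fin 2 → ℕ → K) (A : Matrix (Fin 2) (Fin 2) K) (k : Fin 2) :
    toForm d (transform d φ A k) =
      ∑ j, MvPolynomial.C (A.adjugate k j) * substHom A (toForm d (φ j)) := by
  rw [transform_eq_coeffVec, toForm_coeffVec (isHomogeneous_transform_form d φ A k)]

theorem dehomogenization_transform (d : ℕ) (φ : Fin 2 → ℕ → K) (A : Matrix (Fin 2) (Fin 2) K)
    (k : Fin 2) :
    dehomogenization d (transform d φ A k) = ∑ j, C (A.adjugate k j) * ∑ i ∈ range (d + 1),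
      C (φ j i) * (C (A 0 0) * X + C (A 0 1)) ^ i * (C (A 1 0) * X + C (A 1 1)) ^ (d - i) := by
  rw [transform_eq_coeffVec, dehomogenization_coeffVec (isHomogeneous_transform_form d φ A k),
    map_sum]
  simp only [map_mul, MvPolynomial.algHom_C, dehomogenization_substHom, algebraMap_eq]

theorem transform_eq_zero_of_lt (φ : Fin 2 → ℕ → K) (A : Matrix (Fin 2) (Fin 2) K) (k : Fin 2)
    {d i : ℕ} (hi : d < i) : transform d φ A k i = 0 := by
  rw [transform_eq_coeffVec]
  refine (isHomogeneous_transform_form d φ A k).coeff_eq_zero ?_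
  have hdegree :
      (Finsupp.single (0 : Fin 2) i + Finsupp.single 1 (d - i)).degree = i + (d - i) := by
    simp [Finsupp.degree_eq_sum]
  lia

theorem transform_apply_eq_coeff {d : ℕ} (φ : Fin 2 → ℕ → K) (A : Matrix (Fin 2) (Fin 2) K)
    (k : Fin 2) {i : ℕ} (hi : i ≤ d) :
    transform d φ A k i = (dehomogenization d (transform d φ A k)).coeff i := by
  rw [coeff_dehomogenization, if_pos hi]

theorem transform_transform (d : ℕ) (φ : Fin 2 → ℕ → K) (A B : Matrix (Fin 2) (Fin 2) K) :
    transform d (transform d φ A) B = transform d φ (A * B) := by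
  funext k
  rw [transform_eq_coeffVec, transform_eq_coeffVec]
  simp only [toForm_transform, map_mul, map_add, substHom_C, substHom_substHom,
    Matrix.adjugate_mul_distrib, Matrix.mul_apply, Fin.sum_univ_two]
  congr 1
  ring

theorem transform_smul (d : ℕ) (c : K) (φ : Fin 2 → ℕ → K) (A : Matrix (Fin 2) (Fin 2) K) :
    transform d (c • φ) A = c • transform d φ A := by
  have htoForm (f : ℕ → K) : toForm d (c • f) = MvPolynomial.C c * toForm d f := by
    simp [toForm, mul_sum, mul_assoc]
  funext k i
  simp only [Pi.smul_apply c, transform_eq_coeffVec, coeffVec, htoForm, map_mul, substHom_C,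
    MvPolynomial.coeff_sum, MvPolynomial.coeff_C_mul, smul_eq_mul, mul_sum, mul_left_comm c]

theorem transform_map {R : Type*} [CommRing R] (σ : R →+* K) (d : ℕ) (φ : Fin 2 → ℕ → R)
    (A : Matrix (Fin 2) (Fin 2) R) (k : Fin 2) (i : ℕ) :
    transform d (fun k i => σ (φ k i)) (A.map σ) k i = σ (transform d φ A k i) := by
  have htoForm (f : ℕ → R) : toForm d (fun i => σ (f i)) = (toForm d f).map σ := by
    simp [toForm]
  have hadj (j : Fin 2) : (A.map σ).adjugate k j = σ (A.adjugate k j) :=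
    congrFun₂ (σ.map_adjugate A).symm k j
  simp only [transform_eq_coeffVec, htoForm, hadj, substHom_map, coeffVec, MvPolynomial.coeff_sum,
    MvPolynomial.coeff_C_mul, MvPolynomial.coeff_map, map_sum, map_mul]

theorem transform_diagonal (φ : Fin 2 → ℕ → K) (t : Fin 2 → K) (k : Fin 2) {d i : ℕ}
    (hi : i ≤ d) :
    transform d φ (.diagonal t) k i = t k.rev * t 0 ^ i * t 1 ^ (d - i) * φ k i := by
  rw [transform_apply_eq_coeff _ _ _ hi, dehomogenization_transform]
  have hsubst (f : ℕ → K) : ∑ i ∈ range (d + 1), C (f i) * (C (Matrix.diagonal t 0 0) * X +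
      C (Matrix.diagonal t 0 1)) ^ i * (C (Matrix.diagonal t 1 0) * X +
      C (Matrix.diagonal t 1 1)) ^ (d - i) =
      dehomogenization d fun i => t 0 ^ i * t 1 ^ (d - i) * f i :=
    sum_congr rfl fun i _ => by
      simp only [Matrix.diagonal_apply_eq, Matrix.diagonal_apply_ne _ zero_ne_one,
        Matrix.diagonal_apply_ne _ one_ne_zero, map_zero, add_zero, zero_mul, zero_add, mul_pow,
        map_mul, map_pow]
      ring
  have hadj (j : Fin 2) : (Matrix.diagonal t).adjugate k j = if k = j then t k.rev else 0 := by
    fin_cases k <;> fin_cases j <;> simp [Matrix.adjugate_fin_two, -Matrix.adjugate_diagonal]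
  simp only [hsubst, finsetSum_coeff, coeff_C_mul, coeff_dehomogenization, if_pos hi, hadj, ite_mul,
    zero_mul, sum_ite_eq, mem_univ, if_true]
  ring

theorem transform_smul_matrix (d : ℕ) (φ : Fin 2 → ℕ → K) (c : K) (A : Matrix (Fin 2) (Fin 2) K) :
    transform d φ (c • A) = c ^ (d + 1) • transform d φ A := by
  have hscalar : c • A = A * .diagonal fun _ => c := by
    rw [← Matrix.smul_one_eq_diagonal, Matrix.mul_smul, mul_one]
  funext k i
  rcases le_or_gt i d with hi | hi
  · rw [hscalar, ← transform_transform, transform_diagonal _ _ _ hi, mul_assoc c, ← pow_add,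
      Nat.add_sub_cancel' hi, ← pow_succ', Pi.smul_apply, Pi.smul_apply, smul_eq_mul]
  · simp [transform_eq_zero_of_lt _ _ _ hi]

end Transform

section Resultant

variable {K : Type*} [CommRing K]

theorem sylRes_eq_resultant (m n : ℕ) (f g : ℕ → K) :
    sylRes m n f g = (dehomogenization m f).resultant (dehomogenization n g) m n := by
  let e : Fin (m + n) ≃ Fin (n + m) := Fin.revPerm.trans (finCongr (add_comm m n))
  rw [resultant, ← Matrix.det_transpose, sylRes, ← Matrix.det_submatrix_equiv_self e]
  congr 1
  ext i j
  have hi : (e i : ℕ) = m + n - (i + 1) := by simp [e]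
  have hj : (e j : ℕ) = m + n - (j + 1) := by simp [e]
  simp only [Matrix.submatrix_apply, Matrix.of_apply, Matrix.transpose_apply, hi, hj, sylvester]
  induction i using Fin.addCases with
  | left i =>
    simp only [Fin.addCases_left, Fin.val_castAdd, coeff_dehomogenization, Set.mem_Icc]
    rw [if_neg (by lia)]
    split_ifs <;> first | lia | (congr 1; lia)
  | right i =>
    simp only [Fin.addCases_right, Fin.val_natAdd, coeff_dehomogenization, Set.mem_Icc]
    rw [if_pos (by lia)]
    split_ifs <;> first | lia | (congr 1; lia)

theorem resultant_taylor_of_natDegree_le {p q : K[X]} {m n : ℕ} (hp : p.natDegree ≤ m)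
    (hq : q.natDegree ≤ n) (c : K) :
    (taylor c p).resultant (taylor c q) m n = p.resultant q m n := by
  have hexact : (taylor c p).resultant (taylor c q) p.natDegree q.natDegree = p.resultant q := by
    simpa only [natDegree_taylor] using resultant_taylor p q c
  have htaylor (r : K[X]) : (taylor c r).natDegree ≤ r.natDegree := (natDegree_taylor r c).le
  rcases hp.lt_or_eq with hp' | rfl
  · rcases hq.lt_or_eq with hq' | rfl
    · rw [resultant_eq_zero_of_lt_lt _ _ _ _ (by simpa) (by simpa),
        resultant_eq_zero_of_lt_lt _ _ _ _ hp' hq']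
    · obtain ⟨k, rfl⟩ := Nat.exists_eq_add_of_le hp
      rw [resultant_add_left_deg _ _ _ _ _ (htaylor p), resultant_add_left_deg _ _ _ _ _ le_rfl,
        hexact, coeff_taylor_natDegree, coeff_natDegree]
  · obtain ⟨k, rfl⟩ := Nat.exists_eq_add_of_le hq
    rw [resultant_add_right_deg _ _ _ _ _ (htaylor q), resultant_add_right_deg _ _ _ _ _ le_rfl,
      hexact, coeff_taylor_natDegree, coeff_natDegree]

theorem sylRes_rev (d : ℕ) (f g : ℕ → K) :
    sylRes d d (fun i => g (d - i)) (fun i => f (d - i)) = sylRes d d f g := by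
  rw [sylRes, ← Matrix.det_submatrix_equiv_self Fin.revPerm, sylRes]
  congr 1
  ext i j
  simp only [Matrix.submatrix_apply, Matrix.of_apply, Fin.revPerm_apply, Fin.val_rev]
  split_ifs <;> first | lia | (congr 1; lia)

theorem sylRes_mem_span_const {d : ℕ} (hd : d ≠ 0) (f g : ℕ → K) :
    sylRes d d f g ∈ Ideal.span {f 0, g 0} := by
  obtain ⟨p, q, -, -, h⟩ := exists_mul_add_mul_eq_C_resultant _ _
    (natDegree_dehomogenization_le d f) (natDegree_dehomogenization_le d g) (.inl hd)
  have h0 := congrArg (coeff · 0) h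
  simp only [coeff_add, mul_coeff_zero, coeff_dehomogenization, Nat.zero_le, if_true,
    coeff_C_zero] at h0
  rw [sylRes_eq_resultant, ← h0, Ideal.mem_span_pair]
  exact ⟨p.coeff 0, q.coeff 0, by ring⟩

theorem sylRes_mem_span_top {d : ℕ} (hd : d ≠ 0) (f g : ℕ → K) :
    sylRes d d f g ∈ Ideal.span {f d, g d} := by
  have h := sylRes_mem_span_const hd (fun i => g (d - i)) (fun i => f (d - i))
  rwa [sylRes_rev, Set.pair_comm] at h

theorem sylRes_smul_smul (m n : ℕ) (a b : K) (f g : ℕ → K) :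
    sylRes m n (a • f) (b • g) = a ^ n * b ^ m * sylRes m n f g := by
  have hsmul (d : ℕ) (c : K) (f : ℕ → K) :
      dehomogenization d (c • f) = C c * dehomogenization d f := by
    simp [dehomogenization, mul_sum, mul_assoc]
  rw [sylRes_eq_resultant, sylRes_eq_resultant, hsmul, hsmul, resultant_C_mul_left,
    resultant_C_mul_right, mul_assoc]

theorem sylRes_map {R : Type*} [CommRing R] (σ : R →+* K) (d : ℕ) (f g : ℕ → R) :
    sylRes d d (fun i => σ (f i)) (fun i => σ (g i)) = σ (sylRes d d f g) := by
  have hmap (f : ℕ → R) : dehomogenization d (fun i => σ (f i)) = (dehomogenization d f).map σ := by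
    simp [dehomogenization, Polynomial.map_sum]
  rw [sylRes_eq_resultant, sylRes_eq_resultant, hmap, hmap, resultant_map_map]

theorem sylRes_congr {d : ℕ} {f f' g g' : ℕ → K} (hf : ∀ i ≤ d, f i = f' i)
    (hg : ∀ i ≤ d, g i = g' i) : sylRes d d f g = sylRes d d f' g' := by
  rw [sylRes_eq_resultant, sylRes_eq_resultant, dehomogenization_congr hf,
    dehomogenization_congr hg]

theorem transform_swap (φ : Fin 2 → ℕ → K) (k : Fin 2) {d i : ℕ} (hi : i ≤ d) :
    transform d φ !![0, 1; 1, 0] k i = -φ k.rev (d - i) := by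
  have hsubst (f : ℕ → K) : ∑ i ∈ range (d + 1), C (f i) * X ^ (d - i) =
      dehomogenization d fun i => f (d - i) := by
    rw [← sum_flip]
    exact sum_congr rfl fun i hi => by rw [Nat.sub_sub_self (by simpa [Nat.lt_succ_iff] using hi)]
  rw [transform_apply_eq_coeff _ _ _ hi, dehomogenization_transform]
  fin_cases k <;> simp [Matrix.adjugate_fin_two, hsubst, coeff_dehomogenization, hi]

theorem sylRes_transform_swap (d : ℕ) (φ : Fin 2 → ℕ → K) :
    sylRes d d (transform d φ !![0, 1; 1, 0] 0) (transform d φ !![0, 1; 1, 0] 1) =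
      sylRes d d (φ 0) (φ 1) := by
  have hsign : (-1 : K) ^ d * (-1) ^ d = 1 := by rw [← mul_pow, neg_mul_neg, one_mul, one_pow]
  calc sylRes d d (transform d φ !![0, 1; 1, 0] 0) (transform d φ !![0, 1; 1, 0] 1)
    _ = sylRes d d ((-1 : K) • fun i => φ 1 (d - i)) ((-1 : K) • fun i => φ 0 (d - i)) :=
        sylRes_congr (fun i hi => by simp [transform_swap φ 0 hi])
          (fun i hi => by simp [transform_swap φ 1 hi])
    _ = sylRes d d (φ 0) (φ 1) := by rw [sylRes_smul_smul, hsign, one_mul, sylRes_rev]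

theorem sylRes_transform_upper (d : ℕ) (φ : Fin 2 → ℕ → K) (c : K) :
    sylRes d d (transform d φ !![1, c; 0, 1] 0) (transform d φ !![1, c; 0, 1] 1) =
      sylRes d d (φ 0) (φ 1) := by
  have htaylor (f : ℕ → K) : ∑ i ∈ range (d + 1), C (f i) * (X + C c) ^ i =
      taylor c (dehomogenization d f) := by
    simp [dehomogenization]
  have hdeg (f : ℕ → K) : (taylor c (dehomogenization d f)).natDegree ≤ d :=
    (natDegree_taylor _ _).trans_le (natDegree_dehomogenization_le d f)
  have h0 : dehomogenization d (transform d φ !![1, c; 0, 1] 0) =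
      taylor c (dehomogenization d (φ 0)) + taylor c (dehomogenization d (φ 1)) * C (-c) := by
    simp [dehomogenization_transform, Matrix.adjugate_fin_two, htaylor, mul_comm (C c)]
  have h1 : dehomogenization d (transform d φ !![1, c; 0, 1] 1) =
      taylor c (dehomogenization d (φ 1)) := by
    simp [dehomogenization_transform, Matrix.adjugate_fin_two, htaylor]
  rw [sylRes_eq_resultant, h0, h1, resultant_add_mul_left _ _ _ _ _ (by simp) (hdeg _),
    resultant_taylor_of_natDegree_le (natDegree_dehomogenization_le _ _)
      (natDegree_dehomogenization_le _ _), sylRes_eq_resultant]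

theorem sylRes_mul_pow [IsDomain K] (m n : ℕ) {a b : K} (ha : a ≠ 0) (hb : b ≠ 0) (f g : ℕ → K) :
    sylRes m n (fun i => a ^ i * b ^ (m - i) * f i) (fun i => a ^ i * b ^ (n - i) * g i) =
      (a * b) ^ (m * n) * sylRes m n f g := by
  have hprod : ∏ i : Fin (n + m), (if (i : ℕ) < n then a ^ m else b ^ n) = (a * b) ^ (m * n) := by
    simp [Fin.prod_univ_add, mul_pow, ← pow_mul, mul_comm n m]
  have hP (c : K) (hc : c ≠ 0) : ∏ i : Fin (n + m), c ^ (i : ℕ) ≠ 0 :=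
    prod_ne_zero_iff.2 fun i _ => pow_ne_zero _ hc
  have hpow (d i j : ℕ) (hij : i ≤ j) (hjd : j ≤ i + d) (x : K) : b ^ i * (a ^ j *
      (a ^ (d - (j - i)) * b ^ (d - (d - (j - i))) * x)) = a ^ d * (b ^ j * (a ^ i * x)) := by
    obtain ⟨k, rfl⟩ := Nat.exists_eq_add_of_le hij
    obtain ⟨l, rfl⟩ := Nat.exists_eq_add_of_le (Nat.le_of_add_le_add_left hjd)
    simp only [Nat.add_sub_cancel_left, Nat.add_sub_cancel_right]
    ring
  -- Conjugating the Sylvester matrix by diagonal matrices of powers of `a` and `b` makes the weight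
  -- of its `(i, j)` entry depend on `i` only.
  refine mul_left_cancel₀ (mul_ne_zero (hP b hb) (hP a ha)) ?_
  rw [← hprod, mul_left_comm, mul_assoc, mul_assoc, sylRes, sylRes,
    ← Matrix.det_mul_row fun j : Fin (n + m) => a ^ (j : ℕ),
    ← Matrix.det_mul_column fun i : Fin (n + m) => b ^ (i : ℕ),
    ← Matrix.det_mul_column fun i : Fin (n + m) => a ^ (i : ℕ),
    ← Matrix.det_mul_row fun j : Fin (n + m) => b ^ (j : ℕ), ← Matrix.det_mul_column]
  congr 1
  ext i j
  simp only [Matrix.of_apply]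
  by_cases hi : (i : ℕ) < n
  · simp only [if_pos hi]
    split_ifs with hij
    · exact hpow m i j hij.1 hij.2 _
    · simp only [mul_zero]
  · obtain ⟨k, hk⟩ := Nat.exists_eq_add_of_le (not_lt.1 hi)
    simp only [hk, if_neg (show ¬n + k < n by lia), Nat.add_sub_cancel_left]
    split_ifs with hkj
    · have hkpow := hpow n k j hkj.1 hkj.2 (g (n - (j - k)))
      rw [pow_add, pow_add, mul_assoc (b ^ n), hkpow]
      ring
    · simp only [mul_zero]

theorem sylRes_transform_diagonal [IsDomain K] (d : ℕ) (φ : Fin 2 → ℕ → K) (t : Fin 2 → K)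
    (ht : (Matrix.diagonal t).det ≠ 0) :
    sylRes d d (transform d φ (.diagonal t) 0) (transform d φ (.diagonal t) 1) =
      (Matrix.diagonal t).det ^ ((d + 1) * d) * sylRes d d (φ 0) (φ 1) := by
  rw [Matrix.det_diagonal, Fin.prod_univ_two] at ht ⊢
  calc sylRes d d (transform d φ (.diagonal t) 0) (transform d φ (.diagonal t) 1)
    _ = sylRes d d (t 1 • fun i => t 0 ^ i * t 1 ^ (d - i) * φ 0 i)
          (t 0 • fun i => t 0 ^ i * t 1 ^ (d - i) * φ 1 i) :=
        sylRes_congr (fun i hi => by simp [transform_diagonal φ t 0 hi, mul_assoc])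
          (fun i hi => by simp [transform_diagonal φ t 1 hi, mul_assoc])
    _ = (t 0 * t 1) ^ ((d + 1) * d) * sylRes d d (φ 0) (φ 1) := by
        rw [sylRes_smul_smul, sylRes_mul_pow d d (left_ne_zero_of_mul ht)
          (right_ne_zero_of_mul ht)]
        ring

theorem sylRes_transform_transvection (d : ℕ) (φ : Fin 2 → ℕ → K) {i j : Fin 2} (hij : i ≠ j)
    (c : K) :
    sylRes d d (transform d φ (.transvection i j c) 0) (transform d φ (.transvection i j c) 1) =
      sylRes d d (φ 0) (φ 1) := by
  have hupper : Matrix.transvection 0 1 c = !![1, c; 0, 1] := by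
    ext i j
    fin_cases i <;> fin_cases j <;> simp [Matrix.transvection]
  have hlower : Matrix.transvection 1 0 c =
      !![0, 1; 1, 0] * !![1, c; 0, 1] * !![0, 1; 1, 0] := by
    ext i j
    fin_cases i <;> fin_cases j <;> simp [Matrix.transvection]
  obtain ⟨rfl, rfl⟩ | ⟨rfl, rfl⟩ : i = 0 ∧ j = 1 ∨ i = 1 ∧ j = 0 := by lia
  · rw [hupper, sylRes_transform_upper]
  · rw [hlower, ← transform_transform, ← transform_transform, sylRes_transform_swap,
      sylRes_transform_upper, sylRes_transform_swap]

end Resultant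

theorem sylRes_transform_of_field {K : Type*} [Field K] (d : ℕ) (φ : Fin 2 → ℕ → K)
    {A : Matrix (Fin 2) (Fin 2) K} (hA : A.det ≠ 0) :
    sylRes d d (transform d φ A 0) (transform d φ A 1) =
      A.det ^ ((d + 1) * d) * sylRes d d (φ 0) (φ 1) := by
  refine Matrix.diagonal_transvection_induction_of_det_ne_zero (fun A => ∀ φ : Fin 2 → ℕ → K,
    sylRes d d (transform d φ A 0) (transform d φ A 1) =
      A.det ^ ((d + 1) * d) * sylRes d d (φ 0) (φ 1)) A hA
    (fun t ht φ => sylRes_transform_diagonal d φ t ht) (fun t φ => ?_)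
    (fun A B _ _ ihA ihB φ => ?_) φ
  · rw [t.det, one_pow, one_mul]
    exact sylRes_transform_transvection d φ t.hij t.c
  · rw [← transform_transform, ihB, ihA, Matrix.det_mul, mul_pow]
    ring

theorem sylRes_transform {R : Type*} [CommRing R] [IsDomain R] (d : ℕ) (φ : Fin 2 → ℕ → R)
    {A : Matrix (Fin 2) (Fin 2) R} (hA : A.det ≠ 0) :
    sylRes d d (transform d φ A 0) (transform d φ A 1) =
      A.det ^ ((d + 1) * d) * sylRes d d (φ 0) (φ 1) := by
  let σ := algebraMap R (FractionRing R)
  have hσ : Function.Injective σ := IsFractionRing.injective R (FractionRing R)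
  have hdet : (A.map σ).det = σ A.det := (σ.map_det A).symm
  have hfield := sylRes_transform_of_field d (fun k i => σ (φ k i)) (A := A.map σ)
    (hdet ▸ (map_ne_zero_iff σ hσ).2 hA)
  refine hσ ?_
  rw [map_mul, map_pow, ← hdet, ← sylRes_map, ← sylRes_map, ← hfield]
  simp only [← transform_map]

theorem sylRes_smul_transform {R : Type*} [CommRing R] [IsDomain R] (d : ℕ) (c : R)
    (φ : Fin 2 → ℕ → R) {A : Matrix (Fin 2) (Fin 2) R} (hA : A.det ≠ 0) :
    sylRes d d ((c • transform d φ A) 0) ((c • transform d φ A) 1) =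
      (c ^ 2 * A.det ^ (d + 1)) ^ d * sylRes d d (φ 0) (φ 1) := by
  rw [Pi.smul_apply, Pi.smul_apply, sylRes_smul_smul, sylRes_transform d φ hA]
  ring

section SmithNormalForm

variable {R : Type*} [CommRing R] [IsDomain R] [IsPrincipalIdealRing R]
  {n : Type*} [Fintype n] [DecidableEq n]

theorem exists_isUnit_mul_diagonal_mul {A : Matrix n n R} (hA : A.det ≠ 0) :
    ∃ (P Q : Matrix n n R) (a : n → R), IsUnit P.det ∧ IsUnit Q.det ∧
      A = P * .diagonal a * Q := by
  have hinj : Function.Injective A.mulVecLin :=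
    Matrix.mulVec_injective_of_det_ne_zero hA
  let e := Pi.basisFun R n
  let v : Module.Basis n R (LinearMap.range A.mulVecLin) :=
    e.map (LinearEquiv.ofInjective A.mulVecLin hinj)
  obtain ⟨b, a, c, hc⟩ := Submodule.exists_smith_normal_form_of_rank_eq e
    ((Module.finrank_eq_card_basis v).trans (Module.finrank_eq_card_basis e).symm)
  refine ⟨e.toMatrix b, c.toMatrix v, a, e.isUnit_det b, c.isUnit_det v, ?_⟩
  ext i j
  have hv : (v j : n → R) i = A i j := by
    simp [v, e]
  have hsum := congrArg (fun x : LinearMap.range A.mulVecLin => (x : n → R) i)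
    (c.sum_toMatrix_smul_self v j)
  simp only [hv, Submodule.coe_sum, Submodule.coe_smul, hc, Finset.sum_apply, Pi.smul_apply,
    smul_eq_mul] at hsum
  rw [← hsum, Matrix.mul_apply]
  refine sum_congr rfl fun k _ => ?_
  rw [Matrix.mul_diagonal, e.toMatrix_apply, Pi.basisFun_repr]
  ring

variable (R) in
theorem exists_isUnit_map_mul_diagonal_mul_map {K : Type*} [Field K] [Algebra R K]
    [IsFractionRing R K] {A : Matrix n n K} (hA : A.det ≠ 0) :
    ∃ (P Q : Matrix n n R) (a : n → K), IsUnit P.det ∧ IsUnit Q.det ∧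
      A = P.map (algebraMap R K) * .diagonal a * Q.map (algebraMap R K) := by
  obtain ⟨c, hc⟩ := IsLocalization.exist_integer_multiples_of_finite (nonZeroDivisors R)
    fun p : n × n => A p.1 p.2
  choose B hB using hc
  have hc0 : algebraMap R K c ≠ 0 := by simp
  have hmap : (Matrix.of fun i j => B (i, j)).map (algebraMap R K) = algebraMap R K c • A := by
    ext i j
    simp [hB, Algebra.smul_def]
  obtain ⟨P, Q, a, hP, hQ, hPQ⟩ := exists_isUnit_mul_diagonal_mul
    (A := Matrix.of fun i j => B (i, j)) fun h => by
      have hdet := (algebraMap R K).map_det (Matrix.of fun i j => B (i, j))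
      rw [h, map_zero, RingHom.mapMatrix_apply, hmap, Matrix.det_smul] at hdet
      exact mul_ne_zero (pow_ne_zero _ hc0) hA hdet.symm
  refine ⟨P, Q, (algebraMap R K c)⁻¹ • fun i => algebraMap R K (a i), hP, hQ, ?_⟩
  rw [Matrix.diagonal_smul, Matrix.mul_smul, Matrix.smul_mul, eq_inv_smul_iff₀ hc0, ← hmap, hPQ,
    Matrix.map_mul, Matrix.map_mul, Matrix.diagonal_map (map_zero _)]

end SmithNormalForm

theorem exists_mul_diagonal_mul_mul_eq_smul_one {R n : Type*} [CommRing R] [Fintype n]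
    [DecidableEq n] {P Q : Matrix n n R} (hP : IsUnit P.det) (hQ : IsUnit Q.det) {x y : n → R}
    {N : R} (hxy : ∀ i, x i * y i = N) : ∃ M, P * .diagonal x * Q * M = N • 1 := by
  refine ⟨Q⁻¹ * .diagonal y * P⁻¹, ?_⟩
  calc P * .diagonal x * Q * (Q⁻¹ * .diagonal y * P⁻¹)
    _ = P * (.diagonal x * (Q * Q⁻¹) * .diagonal y) * P⁻¹ := by simp only [mul_assoc]
    _ = P * (N • 1) * P⁻¹ := by
        rw [Q.mul_nonsing_inv hQ, mul_one, Matrix.diagonal_mul_diagonal, funext hxy,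
          Matrix.smul_one_eq_diagonal]
    _ = N • 1 := by rw [Matrix.mul_smul, mul_one, Matrix.smul_mul, P.mul_nonsing_inv hP]

section Cosets

variable {R : Type*} [CommRing R] [IsDomain R] {n : Type*} [Fintype n] [DecidableEq n]

theorem exists_isUnit_det_eq_mul_of_sub_eq_smul {N : R} (hN : N ≠ 0) {A A' B B' E : Matrix n n R}
    (hA : A * A' = N • 1) (hB : B * B' = N • 1) (hE : B - A = N • E) :
    ∃ U : Matrix n n R, IsUnit U.det ∧ B = A * U := by
  have hBA : B = A * (1 + A' * E) := by
    rw [mul_add, ← mul_assoc, hA, smul_mul_assoc, one_mul, ← hE, mul_one, add_sub_cancel]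
  have hAB : A = B * (1 - B' * E) := by
    rw [mul_sub, ← mul_assoc, hB, smul_mul_assoc, one_mul, ← hE, mul_one, sub_sub_cancel]
  have hdet : A.det ≠ 0 := by
    refine left_ne_zero_of_mul (b := A'.det) ?_
    rw [← Matrix.det_mul, hA, Matrix.det_smul, Matrix.det_one, mul_one]
    exact pow_ne_zero _ hN
  refine ⟨_, .of_mul_eq_one (1 - B' * E).det (mul_left_cancel₀ hdet ?_), hBA⟩
  rw [← mul_assoc, ← Matrix.det_mul, ← Matrix.det_mul, ← hBA, ← hAB, mul_one]

theorem exists_finite_forall_exists_eq_mul_isUnit_det {N : R} (hN : N ≠ 0)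
    [Finite (R ⧸ Ideal.span {N})] :
    ∃ S : Set (Matrix n n R), S.Finite ∧ ∀ A A' : Matrix n n R, A * A' = N • 1 →
      ∃ B ∈ S, ∃ U : Matrix n n R, IsUnit U.det ∧ A = B * U := by
  let D : Set (Matrix n n R) := {A | ∃ A', A * A' = N • 1}
  let π (A : Matrix n n R) : Matrix n n (R ⧸ Ideal.span {N}) := A.map (Ideal.Quotient.mk _)
  obtain ⟨S, hSD, hS⟩ := D.exists_subset_bijOn π
  have : Finite (Matrix n n (R ⧸ Ideal.span {N})) := inferInstanceAs (Finite (n → n → _))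
  refine ⟨S, .of_finite_image (Set.toFinite _) hS.injOn, fun A A' hA => ?_⟩
  obtain ⟨B, hBS, hBA⟩ := hS.surjOn ⟨A, ⟨A', hA⟩, rfl⟩
  obtain ⟨B', hB⟩ := hSD hBS
  have hdvd (i j : n) : N ∣ A i j - B i j := by
    rw [← Ideal.mem_span_singleton, ← Ideal.Quotient.eq]
    exact congrFun₂ hBA.symm i j
  choose E hE using hdvd
  exact ⟨B, hBS, exists_isUnit_det_eq_mul_of_sub_eq_smul hN hB hA (E := .of E) (by ext; simp [hE])⟩

end Cosets

section IntegrallyClosed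

variable {R K : Type*} [CommRing R] [IsIntegrallyClosed R] [Field K] [Algebra R K]
  [IsFractionRing R K]

theorem mem_range_algebraMap_of_pow_mem {n : ℕ} (hn : n ≠ 0) {x : K}
    (hx : x ^ n ∈ (algebraMap R K).range) : x ∈ (algebraMap R K).range := by
  obtain ⟨a, ha⟩ := hx
  exact IsIntegrallyClosed.exists_algebraMap_eq_of_isIntegral_pow hn.pos
    (ha ▸ isIntegral_algebraMap)

theorem sq_mul_mem_range_of_mem_span_pair {d : ℕ} (hd : 2 ≤ d) {f g r : R} {s : K}
    (hf : algebraMap R K f ^ 2 * s ^ (d + 1) ∈ (algebraMap R K).range)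
    (hg : algebraMap R K g ^ 2 * s ^ (d - 1) ∈ (algebraMap R K).range)
    (hr : r ∈ Ideal.span {f, g}) : algebraMap R K r ^ 2 * s ∈ (algebraMap R K).range := by
  have mem (a : R) : algebraMap R K a ∈ (algebraMap R K).range := ⟨a, rfl⟩
  obtain ⟨n, rfl⟩ := Nat.exists_eq_add_of_le' hd
  have hfs : algebraMap R K f * s ∈ (algebraMap R K).range := by
    refine mem_range_algebraMap_of_pow_mem (n := n + 3) (by lia) ?_
    convert mul_mem (mem (f ^ (n + 1))) hf using 1
    rw [map_pow]
    ring
  have hgs : algebraMap R K g ^ 2 * s ∈ (algebraMap R K).range := by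
    refine mem_range_algebraMap_of_pow_mem (n := n + 1) (by lia) ?_
    convert mul_mem (mem (g ^ (2 * n))) hg using 1
    rw [map_pow, Nat.add_succ_sub_one]
    ring
  obtain ⟨x, y, rfl⟩ := Ideal.mem_span_pair.1 hr
  convert add_mem (mul_mem (mem (x ^ 2 * f + 2 * x * y * g)) hfs)
    (mul_mem (mem (y ^ 2)) hgs) using 1
  simp only [map_add, map_mul, map_pow, map_ofNat]
  ring

theorem sq_mul_div_mem_range {d : ℕ} (hd : 2 ≤ d) {f g r : R} {a b l : K} {u : Rˣ} (ha : a ≠ 0)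
    (hu : algebraMap R K u = l ^ 2 * (a * b) ^ (d + 1))
    (hf : l * (b ^ (d + 1) * algebraMap R K f) ∈ (algebraMap R K).range)
    (hg : l * (a * b ^ d * algebraMap R K g) ∈ (algebraMap R K).range)
    (hr : r ∈ Ideal.span {f, g}) : algebraMap R K r ^ 2 * (b / a) ∈ (algebraMap R K).range := by
  obtain ⟨s, rfl⟩ : ∃ s, b = s * a := ⟨b / a, (div_mul_cancel₀ b ha).symm⟩
  rw [mul_div_cancel_right₀ s ha]
  have hsq {x y : K} (hx : x ∈ (algebraMap R K).range)
      (hxy : x ^ 2 = algebraMap R K u * y) : y ∈ (algebraMap R K).range := by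
    have hy : y = algebraMap R K ↑u⁻¹ * x ^ 2 := by
      rw [hxy, ← mul_assoc, ← map_mul, Units.inv_mul, map_one, one_mul]
    exact hy ▸ mul_mem ⟨_, rfl⟩ (pow_mem hx 2)
  refine sq_mul_mem_range_of_mem_span_pair hd (hsq hf ?_) (hsq hg ?_) hr
  · rw [hu]
    ring
  · obtain ⟨n, rfl⟩ := Nat.exists_eq_add_of_le' hd
    rw [hu, Nat.add_succ_sub_one]
    ring

end IntegrallyClosed

section Models

variable {R K : Type*} [CommRing R] [Field K] [Algebra R K]

/-- The pair of forms `ψ` has coefficients in `R` and its resultant generates the ideal `I` of `R`.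
For `I = Res_R([φ])` and `ψ` of the form `[F, G]^{(λ, A)}` this is `R`-minimality. -/
def IsModelWithResultant (I : Ideal R) (d : ℕ) (ψ : Fin 2 → ℕ → K) : Prop :=
  ∃ F : Fin 2 → ℕ → R, (ψ = fun k i => algebraMap R K (F k i)) ∧
    I = Ideal.span {sylRes d d (F 0) (F 1)}

/-- Some multiple `[λ F_A, λ G_A]`, with `λ ≠ 0`, of the transform of `φ = [F, G]` by `A` is a model
over `R` whose resultant generates `I`. -/
def CarriesToModel (I : Ideal R) (d : ℕ) (φ : Fin 2 → ℕ → K) (A : Matrix (Fin 2) (Fin 2) K) :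
    Prop :=
  ∃ l : K, l ≠ 0 ∧ IsModelWithResultant I d (l • transform d φ A)

variable {I : Ideal R} {d : ℕ} {φ : Fin 2 → ℕ → K} {A B : Matrix (Fin 2) (Fin 2) K}

theorem isModelWithResultant_iff [FaithfulSMul R K] {ψ : Fin 2 → ℕ → K} :
    IsModelWithResultant I d ψ ↔ (∀ k i, ∃ a : R, algebraMap R K a = ψ k i) ∧
      ∃ r : R, algebraMap R K r = sylRes d d (ψ 0) (ψ 1) ∧ I = Ideal.span {r} := by
  constructor
  · rintro ⟨F, rfl, hI⟩
    exact ⟨fun k i => ⟨F k i, rfl⟩, _, (sylRes_map _ d _ _).symm, hI⟩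
  · rintro ⟨hψ, r, hr, hI⟩
    choose F hF using hψ
    obtain rfl : (fun k i => algebraMap R K (F k i)) = ψ := funext₂ hF
    rw [sylRes_map, (FaithfulSMul.algebraMap_injective R K).eq_iff] at hr
    exact ⟨F, rfl, hr ▸ hI⟩

theorem carriesToModel_pair_iff [FaithfulSMul R K] {f g : ℕ → K} :
    CarriesToModel I d ![f, g] A ↔ ∃ l : K, l ≠ 0 ∧
      (∀ i, ∃ a : R, algebraMap R K a = l * FA d f g A i) ∧
      (∀ i, ∃ b : R, algebraMap R K b = l * GA d f g A i) ∧
      ∃ r : R, algebraMap R K r =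
        sylRes d d (fun i => l * FA d f g A i) (fun i => l * GA d f g A i) ∧
        I = Ideal.span {r} := by
  simp only [CarriesToModel, isModelWithResultant_iff, Fin.forall_fin_two, and_assoc]
  rfl

theorem carriesToModel_smul_transform_iff {l : K} (hl : l ≠ 0) :
    CarriesToModel I d (l • transform d φ A) B ↔ CarriesToModel I d φ (A * B) := by
  simp only [CarriesToModel, transform_smul, transform_transform, smul_smul]
  refine ⟨fun ⟨c, hc, h⟩ => ⟨_, mul_ne_zero hc hl, h⟩,
    fun ⟨c, hc, h⟩ => ⟨c * l⁻¹, mul_ne_zero hc (inv_ne_zero hl), ?_⟩⟩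
  rwa [inv_mul_cancel_right₀ hl]

theorem CarriesToModel.smul (h : CarriesToModel I d φ A) {c : K} (hc : c ≠ 0) :
    CarriesToModel I d φ (c • A) := by
  obtain ⟨l, hl, h⟩ := h
  refine ⟨l * (c ^ (d + 1))⁻¹, mul_ne_zero hl (inv_ne_zero (pow_ne_zero _ hc)), ?_⟩
  rwa [transform_smul_matrix, smul_smul, inv_mul_cancel_right₀ (pow_ne_zero _ hc)]

variable [IsDomain R]

theorem IsModelWithResultant.transform_map_algebraMap {ψ : Fin 2 → ℕ → K}
    (h : IsModelWithResultant I d ψ) {M : Matrix (Fin 2) (Fin 2) R} (hM : IsUnit M.det) :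
    IsModelWithResultant I d (transform d ψ (M.map (algebraMap R K))) := by
  obtain ⟨F, rfl, rfl⟩ := h
  refine ⟨transform d F M, funext₂ fun k i => transform_map _ _ _ _ _ _, ?_⟩
  rw [sylRes_transform d F hM.ne_zero, Ideal.span_singleton_mul_left_unit (hM.pow _)]

theorem CarriesToModel.mul_map (h : CarriesToModel I d φ A) {M : Matrix (Fin 2) (Fin 2) R}
    (hM : IsUnit M.det) : CarriesToModel I d φ (A * M.map (algebraMap R K)) := by
  obtain ⟨l, hl, h⟩ := h
  refine ⟨l, hl, ?_⟩
  rw [← transform_transform, ← transform_smul]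
  exact h.transform_map_algebraMap hM

theorem carriesToModel_smul_mul_map_iff {c : K} (hc : c ≠ 0) {M : Matrix (Fin 2) (Fin 2) R}
    (hM : IsUnit M.det) :
    CarriesToModel I d φ (c • (A * M.map (algebraMap R K))) ↔ CarriesToModel I d φ A := by
  refine ⟨fun h => ?_, fun h => (h.mul_map hM).smul hc⟩
  have h' := (h.smul (inv_ne_zero hc)).mul_map (M.isUnit_nonsing_inv_det hM)
  rwa [smul_smul, inv_mul_cancel₀ hc, one_smul, mul_assoc, ← Matrix.map_mul,
    M.mul_nonsing_inv hM, Matrix.map_one _ (map_zero _) (map_one _), mul_one] at h'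

end Models

section Rigidity

variable {R K : Type*} [CommRing R] [IsDomain R] [IsIntegrallyClosed R] [Field K] [Algebra R K]
  [IsFractionRing R K] {I : Ideal R} {d : ℕ} {φ : Fin 2 → ℕ → K}

theorem IsModelWithResultant.exists_unit_eq_sq_mul_det_pow (hd : d ≠ 0) (hI : I ≠ ⊥)
    (hφ : IsModelWithResultant I d φ) {A : Matrix (Fin 2) (Fin 2) K} (hA : A.det ≠ 0) {l : K}
    (h : IsModelWithResultant I d (l • transform d φ A)) :
    ∃ u : Rˣ, algebraMap R K u = l ^ 2 * A.det ^ (d + 1) := by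
  obtain ⟨-, r, hr, rfl⟩ := isModelWithResultant_iff.1 hφ
  obtain ⟨-, r', hr', hspan⟩ := isModelWithResultant_iff.1 h
  obtain ⟨v, rfl⟩ := Ideal.span_singleton_eq_span_singleton.1 hspan
  have hr0 : algebraMap R K r ≠ 0 := by simpa using hI
  have hpow : algebraMap R K v = (l ^ 2 * A.det ^ (d + 1)) ^ d := by
    refine mul_left_cancel₀ hr0 ?_
    rw [← map_mul, hr', sylRes_smul_transform d l φ hA, hr, mul_comm]
  obtain ⟨w, hw⟩ := mem_range_algebraMap_of_pow_mem hd ⟨(v : R), hpow⟩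
  have hwv : w ^ d = v := IsFractionRing.injective R K (by rw [map_pow, hw, hpow])
  obtain ⟨u, rfl⟩ := (isUnit_pow_iff hd).1 (hwv ▸ v.isUnit)
  exact ⟨u, hw⟩

theorem IsModelWithResultant.sq_mul_div_mem_range (hd : 2 ≤ d) (hI : I ≠ ⊥)
    (hφ : IsModelWithResultant I d φ) {t : Fin 2 → K} (ht : ∀ k, t k ≠ 0)
    (h : CarriesToModel I d φ (.diagonal t)) {r : R} (hr : r ∈ I) :
    algebraMap R K r ^ 2 * (t 1 / t 0) ∈ (algebraMap R K).range ∧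
      algebraMap R K r ^ 2 * (t 0 / t 1) ∈ (algebraMap R K).range := by
  obtain ⟨l, -, h⟩ := h
  have hdet : (Matrix.diagonal t).det = t 0 * t 1 := by
    rw [Matrix.det_diagonal, Fin.prod_univ_two]
  obtain ⟨u, hu⟩ := hφ.exists_unit_eq_sq_mul_det_pow (by lia) hI (by simp [hdet, ht]) h
  rw [hdet] at hu
  obtain ⟨F, rfl, hF⟩ := hφ
  have hcoeff (k : Fin 2) (i : ℕ) (hi : i ≤ d) :
      l * (t k.rev * t 0 ^ i * t 1 ^ (d - i) * algebraMap R K (F k i)) ∈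
        (algebraMap R K).range := by
    obtain ⟨H, hH, -⟩ := h
    refine ⟨H k i, ?_⟩
    rw [← transform_diagonal (fun k i => algebraMap R K (F k i)) t k hi]
    exact (congrFun₂ hH k i).symm
  have h00 : l * (t 1 ^ (d + 1) * algebraMap R K (F 0 0)) ∈ (algebraMap R K).range := by
    simpa [pow_succ'] using hcoeff 0 0 d.zero_le
  have h10 : l * (t 0 * t 1 ^ d * algebraMap R K (F 1 0)) ∈ (algebraMap R K).range := by
    simpa using hcoeff 1 0 d.zero_le
  have h1d : l * (t 0 ^ (d + 1) * algebraMap R K (F 1 d)) ∈ (algebraMap R K).range := by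
    simpa [pow_succ'] using hcoeff 1 d le_rfl
  have h0d : l * (t 1 * t 0 ^ d * algebraMap R K (F 0 d)) ∈ (algebraMap R K).range := by
    simpa using hcoeff 0 d le_rfl
  have hconst : I ≤ Ideal.span {F 0 0, F 1 0} :=
    hF ▸ (Ideal.span_singleton_le_iff_mem _).2 (sylRes_mem_span_const (by lia) _ _)
  have htop : I ≤ Ideal.span {F 1 d, F 0 d} :=
    Set.pair_comm (F 0 d) (F 1 d) ▸ hF ▸
      (Ideal.span_singleton_le_iff_mem _).2 (sylRes_mem_span_top (by lia) _ _)
  exact ⟨sq_mul_div_mem_range hd (ht 0) hu h00 h10 (hconst hr),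
    sq_mul_div_mem_range hd (ht 1) (mul_comm (t 0) (t 1) ▸ hu) h1d h0d (htop hr)⟩

end Rigidity

section Finiteness

variable {R K : Type*} [CommRing R] [IsDomain R] [IsPrincipalIdealRing R] [Field K] [Algebra R K]
  [IsFractionRing R K] {I : Ideal R} {d : ℕ} {φ : Fin 2 → ℕ → K}

theorem IsModelWithResultant.exists_eq_smul_map_mul_eq_pow_smul (hd : 2 ≤ d) (hI : I ≠ ⊥)
    (hφ : IsModelWithResultant I d φ) {A : Matrix (Fin 2) (Fin 2) K} (hA : A.det ≠ 0)
    (h : CarriesToModel I d φ A) {r : R} (hr : r ∈ I) (hr0 : r ≠ 0) :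
    ∃ (c : K) (M M' : Matrix (Fin 2) (Fin 2) R), c ≠ 0 ∧ A = c • M.map (algebraMap R K) ∧
      M * M' = r ^ 4 • 1 := by
  obtain ⟨P, Q, t, hP, hQ, rfl⟩ := exists_isUnit_map_mul_diagonal_mul_map R hA
  have ht (k : Fin 2) : t k ≠ 0 := by
    rw [Matrix.det_mul, Matrix.det_mul, Matrix.det_diagonal] at hA
    exact prod_ne_zero_iff.1 (right_ne_zero_of_mul (left_ne_zero_of_mul hA)) k (mem_univ k)
  have hdiag : CarriesToModel I d (transform d φ (P.map (algebraMap R K))) (.diagonal t) := by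
    rw [← one_smul K (_ * _), carriesToModel_smul_mul_map_iff one_ne_zero hQ,
      ← carriesToModel_smul_transform_iff one_ne_zero, one_smul] at h
    exact h
  obtain ⟨⟨x, hx⟩, y, hy⟩ :=
    (hφ.transform_map_algebraMap hP).sq_mul_div_mem_range hd hI ht hdiag hr
  have hσ : Function.Injective (algebraMap R K) := IsFractionRing.injective R K
  have hr0' : algebraMap R K r ≠ 0 := (map_ne_zero_iff _ hσ).2 hr0
  have hxy : x * y = r ^ 4 := by
    refine hσ ?_
    rw [map_mul, hx, hy, map_pow, mul_mul_mul_comm, div_mul_div_cancel₀ (ht 0), div_self (ht 1)]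
    ring
  have hscale : Matrix.diagonal t = (t 0 / algebraMap R K r ^ 2) •
      (Matrix.diagonal ![r ^ 2, x]).map (algebraMap R K) := by
    rw [Matrix.diagonal_map (map_zero _), ← Matrix.diagonal_smul, Matrix.diagonal_injective.eq_iff]
    have := ht 0
    ext k
    fin_cases k
    · simp [hr0']
    · change t 1 = t 0 / algebraMap R K r ^ 2 * algebraMap R K x
      rw [hx]
      field_simp
  obtain ⟨M', hM'⟩ := exists_mul_diagonal_mul_mul_eq_smul_one hP hQ (x := ![r ^ 2, x])
    (y := ![r ^ 2, y]) (N := r ^ 4) (by simp [Fin.forall_fin_two, hxy, ← pow_add])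
  refine ⟨t 0 / algebraMap R K r ^ 2, P * .diagonal ![r ^ 2, x] * Q, M',
    div_ne_zero (ht 0) (pow_ne_zero _ hr0'), ?_, hM'⟩
  rw [Matrix.map_mul, Matrix.map_mul, hscale, Matrix.mul_smul, Matrix.smul_mul]

theorem IsModelWithResultant.exists_fin_forall_carriesToModel_iff [Ring.HasFiniteQuotients R]
    (hd : 2 ≤ d) (hI : I ≠ ⊥) (hφ : IsModelWithResultant I d φ) :
    ∃ (m : ℕ) (Bs : Fin m → Matrix (Fin 2) (Fin 2) K), ∀ A : Matrix (Fin 2) (Fin 2) K, A.det ≠ 0 →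
      (CarriesToModel I d φ A ↔ ∃ (j : Fin m) (c : K) (M : Matrix (Fin 2) (Fin 2) R),
        c ≠ 0 ∧ IsUnit M.det ∧ A = c • (Bs j * M.map (algebraMap R K))) := by
  obtain ⟨r, hr, hr0⟩ := Submodule.exists_mem_ne_zero_of_ne_bot hI
  have hN : r ^ 4 ≠ 0 := pow_ne_zero _ hr0
  have : Finite (R ⧸ Ideal.span {r ^ 4}) := Ring.HasFiniteQuotients.finiteQuotient (by simpa)
  obtain ⟨S, hS, hcover⟩ := exists_finite_forall_exists_eq_mul_isUnit_det (n := Fin 2) hN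
  obtain ⟨m, Bs, -, hBs⟩ :=
    ((hS.image fun B => B.map (algebraMap R K)).sep (CarriesToModel I d φ)).fin_param
  refine ⟨m, Bs, fun A hA => ⟨fun h => ?_, ?_⟩⟩
  · obtain ⟨c, M, M', hc, rfl, hM⟩ := hφ.exists_eq_smul_map_mul_eq_pow_smul hd hI hA h hr hr0
    obtain ⟨B, hBS, U, hU, rfl⟩ := hcover M M' hM
    rw [Matrix.map_mul, carriesToModel_smul_mul_map_iff hc hU] at h
    obtain ⟨j, hj⟩ := hBs.ge ⟨⟨B, hBS, rfl⟩, h⟩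
    exact ⟨j, c, U, hc, hU, by rw [hj, Matrix.map_mul]⟩
  · rintro ⟨j, c, M, hc, hM, rfl⟩
    exact (carriesToModel_smul_mul_map_iff hc hM).2 (hBs.le ⟨j, rfl⟩).2

theorem statement15_general [Ring.HasFiniteQuotients R] (hd : 2 ≤ d) (I : Ideal R)
    (hres : sylRes d d (φ 0) (φ 1) ≠ 0) :
    ∃ (m : ℕ) (Bs : Fin m → Matrix (Fin 2) (Fin 2) K), ∀ A : Matrix (Fin 2) (Fin 2) K, A.det ≠ 0 →
      (CarriesToModel I d φ A ↔ ∃ (j : Fin m) (c : K) (M : Matrix (Fin 2) (Fin 2) R),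
        c ≠ 0 ∧ IsUnit M.det ∧ A = c • (Bs j * M.map (algebraMap R K))) := by
  by_cases hex : ∃ A, A.det ≠ 0 ∧ CarriesToModel I d φ A
  · obtain ⟨A₀, hA₀, l, hl, hmodel⟩ := hex
    have hI : I ≠ ⊥ := by
      rintro rfl
      obtain ⟨-, r, hr, hspan⟩ := isModelWithResultant_iff.1 hmodel
      rw [Ideal.span_singleton_eq_bot.1 hspan.symm, map_zero, sylRes_smul_transform d l φ hA₀] at hr
      simp [hl, hA₀, hres] at hr
    obtain ⟨m, Bs, hBs⟩ := hmodel.exists_fin_forall_carriesToModel_iff hd hI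
    refine ⟨m, fun j => A₀ * Bs j, fun A hA => ?_⟩
    have hunit : IsUnit A₀ := (Matrix.isUnit_iff_isUnit_det A₀).2 hA₀.isUnit
    obtain ⟨B, rfl⟩ : ∃ B, A = A₀ * B :=
      ⟨A₀⁻¹ * A, (A₀.mul_nonsing_inv_cancel_left A hA₀.isUnit).symm⟩
    rw [← carriesToModel_smul_transform_iff hl,
      hBs B (right_ne_zero_of_mul (A₀.det_mul B ▸ hA))]
    simp only [mul_assoc, ← Matrix.mul_smul, hunit.mul_right_inj]
  · exact ⟨0, Fin.elim0, fun A hA => ⟨fun h => (hex ⟨A, hA, h⟩).elim, fun ⟨j, _⟩ => j.elim0⟩⟩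

end Finiteness

open NumberField in
/-- Let `K` be a number field whose ring of integers `R = 𝓞 K` is a PID, and
let `[F,G]` be an `R`-minimal model of a rational map of degree `d ≥ 2`. Then the set of
`A ∈ GL₂(K)` for which some `λ ∈ K^×` makes `[λF_A, λG_A]` an `R`-minimal model has image in
`PGL₂(K)` a finite union of left cosets of the image of `GL₂(R)`. -/
theorem statement15 {K : Type*} [Field K] [NumberField K]
    [IsPrincipalIdealRing (𝓞 K)]
    (d : ℕ) (hd : 2 ≤ d) (f g : ℕ → K)
    (hf : ∀ i, d < i → f i = 0) (hg : ∀ i, d < i → g i = 0)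
    (hres : sylRes d d f g ≠ 0)
    (hfR : ∀ i, ∃ a : 𝓞 K, algebraMap (𝓞 K) K a = f i)
    (hgR : ∀ i, ∃ b : 𝓞 K, algebraMap (𝓞 K) K b = g i)
    (hmin : ∃ r : 𝓞 K, algebraMap (𝓞 K) K r = sylRes d d f g ∧
      ResIdeal (𝓞 K) d f g = Ideal.span {r}) :
    ∃ (m : ℕ) (Bs : Fin m → Matrix (Fin 2) (Fin 2) K),
      ∀ A : Matrix (Fin 2) (Fin 2) K, A.det ≠ 0 →
        ((∃ l : K, l ≠ 0 ∧
            (∀ i, ∃ a : 𝓞 K, algebraMap (𝓞 K) K a = l * FA d f g A i) ∧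
            (∀ i, ∃ b : 𝓞 K, algebraMap (𝓞 K) K b = l * GA d f g A i) ∧
            (∃ r : 𝓞 K,
              algebraMap (𝓞 K) K r =
                sylRes d d (fun i => l * FA d f g A i) (fun i => l * GA d f g A i) ∧
              ResIdeal (𝓞 K) d f g = Ideal.span {r})) ↔
          (∃ (j : Fin m) (c : K) (M : Matrix (Fin 2) (Fin 2) (𝓞 K)),
            c ≠ 0 ∧ IsUnit M.det ∧ A = c • (Bs j * M.map (algebraMap (𝓞 K) K)))) := by
  simpa only [carriesToModel_pair_iff] using
    statement15_general (φ := ![f, g]) hd (ResIdeal (𝓞 K) d f g) hres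

end
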